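/- Every AE f ∈ 𝒜(−) can be expressed uniquely as a difference f = g − h, where g, h ∈ 𝒜(+, ×, ÷), 𝒱(g) ∩ 𝒱(h) = ∅ with 𝒱(g) ∪ 𝒱(h) = 𝒱(f), and h is of the first type. Moreover, f is of the third type if and only if either g ≅ h, or g ≅ G + h for some G ∈ 𝒜(+, ×, ÷) of the third type with 𝒱(G) ∩ 𝒱(h) = ∅. -/

import Mathlib

/- Common framework: `K = ℝ(x₁,x₂,…)` is the field of rational functions over `ℝ` in
countably many variables (the fraction field of `MvPolynomial ℕ ℝ`), arithmetic
expressions, the permutation action, isomorphism, types, the `EndsWith` classification,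
multilinear forms and monicity, isomorphism classes and their counting. -/

open MvPolynomial

noncomputable section

abbrev P : Type := MvPolynomial ℕ ℝ
abbrev K : Type := FractionRing P

def toK : P →+* K := algebraMap P K

/-- The variable `xᵢ`, as an element of `K`. -/
def Xv (i : ℕ) : K := toK (X i)

/-- `Vars f` : the set of variables on which `f` depends, i.e. the variables occurring in a
representation of `f` as a quotient of two coprime polynomials. -/
def Vars (f : K) : Set ℕ :=
  {i | ∃ p q : P, q ≠ 0 ∧ IsRelPrime p q ∧ f = toK p / toK q ∧ (i ∈ p.vars ∨ i ∈ q.vars)}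

/-- `𝒜` : the smallest subset of `K` containing every variable and closed under the four
binary operations applied to expressions with disjoint variable sets. -/
inductive IsAE : K → Prop
  | var (i : ℕ) : IsAE (Xv i)
  | add {g h : K} : IsAE g → IsAE h → Disjoint (Vars g) (Vars h) → IsAE (g + h)
  | sub {g h : K} : IsAE g → IsAE h → Disjoint (Vars g) (Vars h) → IsAE (g - h)
  | mul {g h : K} : IsAE g → IsAE h → Disjoint (Vars g) (Vars h) → IsAE (g * h)
  | div {g h : K} : IsAE g → IsAE h → Disjoint (Vars g) (Vars h) → IsAE (g / h)

/-- The action `σ·f` of a permutation of the variables on `K`, substituting `σ(xᵢ)` for `xᵢ`. -/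
def permAct (σ : Equiv.Perm ℕ) : K ≃+* K :=
  IsFractionRing.ringEquivOfRingEquiv (renameEquiv ℝ σ).toRingEquiv

/-- `f ≅ g` : `f` and `g` are isomorphic, i.e. differ by a permutation of the variables. -/
def Iso (f g : K) : Prop := ∃ σ : Equiv.Perm ℕ, permAct σ f = g

/-- First type: `-f ∉ 𝒜`. -/
def FirstType (f : K) : Prop := IsAE f ∧ ¬ IsAE (-f)

/-- Second type: `-f ∈ 𝒜` but `f ≇ -f`. -/
def SecondType (f : K) : Prop := IsAE f ∧ IsAE (-f) ∧ ¬ Iso f (-f)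

/-- Third type: `-f ∈ 𝒜` and `f ≅ -f`. -/
def ThirdType (f : K) : Prop := IsAE f ∧ IsAE (-f) ∧ Iso f (-f)

/-- The four binary operators. -/
inductive Op : Type
  | add | sub | mul | div
deriving DecidableEq

/-- `EndsWith f o` : the arithmetic expression `f` ends with the operator `o`. -/
inductive EndsWith : K → Op → Prop
  | var (i : ℕ) : EndsWith (Xv i) Op.mul
  | add_base {i j : ℕ} (hij : i ≠ j) : EndsWith (Xv i + Xv j) Op.add
  | sub_base {i j : ℕ} (hij : i ≠ j) : EndsWith (Xv i - Xv j) Op.sub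
  | mul_base {i j : ℕ} (hij : i ≠ j) : EndsWith (Xv i * Xv j) Op.mul
  | div_base {i j : ℕ} (hij : i ≠ j) : EndsWith (Xv i / Xv j) Op.div
  | add_rec {g h : K} {o₁ o₂ : Op} : IsAE g → IsAE h → Disjoint (Vars g) (Vars h) →
      3 ≤ (Vars (g + h)).ncard → o₁ ≠ Op.sub → o₂ ≠ Op.sub →
      EndsWith g o₁ → EndsWith h o₂ → EndsWith (g + h) Op.add
  | mul_rec {g h : K} {o₁ o₂ : Op} : IsAE g → IsAE h → Disjoint (Vars g) (Vars h) →
      3 ≤ (Vars (g * h)).ncard → o₁ ≠ Op.div → o₂ ≠ Op.div →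
      EndsWith g o₁ → EndsWith h o₂ → EndsWith (g * h) Op.mul
  | div_rec {g h : K} {o₁ o₂ : Op} : IsAE g → IsAE h → Disjoint (Vars g) (Vars h) →
      3 ≤ (Vars (g / h)).ncard → o₁ ≠ Op.div → o₂ ≠ Op.div →
      EndsWith g o₁ → EndsWith h o₂ → EndsWith (g / h) Op.div
  | sub_rec {g h : K} {o₁ o₂ : Op} : IsAE g → IsAE h → Disjoint (Vars g) (Vars h) →
      3 ≤ (Vars (g - h)).ncard → o₁ ≠ Op.sub → o₂ ≠ Op.sub → FirstType h →
      EndsWith g o₁ → EndsWith h o₂ → EndsWith (g - h) Op.sub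

/-- `f` ends with one of the operators in `s`. -/
def EndsIn (f : K) (s : Set Op) : Prop := ∃ o ∈ s, EndsWith f o

/-- The binary operation on `K` corresponding to an operator. -/
def applyOp (o : Op) (a b : K) : K :=
  match o with
  | Op.add => a + b
  | Op.sub => a - b
  | Op.mul => a * b
  | Op.div => a / b

/-- The variable index set `{1, …, n}` (for the variables `x₁, …, xₙ`). -/
def varsUpTo (n : ℕ) : Set ℕ := {i | 1 ≤ i ∧ i ≤ n}

/-- `𝒜ₙ` : arithmetic expressions whose variable set is exactly `{x₁, …, xₙ}`. -/
def AEn (n : ℕ) : Set K := {f | IsAE f ∧ Vars f = varsUpTo n}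

/-- A multilinear polynomial: degree at most `1` in each variable. -/
def Multilinear (p : P) : Prop := ∀ i : ℕ, p.degreeOf i ≤ 1

/-- The key of a (multilinear) monomial: the sorted list of variables occurring in it;
keys are compared in the lexicographic order on lists. -/
def monKey (m : ℕ →₀ ℕ) : List ℕ := m.support.sort (· ≤ ·)

/-- A (multilinear) polynomial is monic if the coefficient of its lexicographically
leading (i.e. first) monomial is positive. -/
def MonicML (p : P) : Prop :=
  ∃ m ∈ p.support, 0 < p.coeff m ∧ ∀ m' ∈ p.support, monKey m ≤ monKey m'

/-- `MLForm f F₁ F₂` : `F₁ / F₂` is the multilinear form of `f`: `F₁, F₂` are coprime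
multilinear polynomials, `F₂` is monic, and `f = F₁ / F₂`. -/
def MLForm (f : K) (F₁ F₂ : P) : Prop :=
  Multilinear F₁ ∧ Multilinear F₂ ∧ IsRelPrime F₁ F₂ ∧ F₂ ≠ 0 ∧ MonicML F₂ ∧
    f = toK F₁ / toK F₂

/-- A monic arithmetic expression: the numerator of its multilinear form is monic as well. -/
def MonicAE (f : K) : Prop := ∃ F₁ F₂ : P, MLForm f F₁ F₂ ∧ MonicML F₁

/-- The isomorphism class of `f`. -/
def classOf (f : K) : Set K := {g | Iso f g}

/-- `S̄` : the set of isomorphism classes of elements of `S`. -/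
def classes (S : Set K) : Set (Set K) := classOf '' S

/-- `|S̄|` : the number of isomorphism classes of elements of `S`. -/
def countClasses (S : Set K) : ℕ := (classes S).ncard

/-- The number of isomorphism classes of elements of `S` depending on exactly `k` variables. -/
def gradeCount (S : Set K) (k : ℕ) : ℕ := countClasses {f ∈ S | (Vars f).ncard = k}

/-- `ω_n` for a graded family having `N k` elements in grade `k` : the sum over all
partitions `(k₁^{m₁},…,k_s^{m_s})` of `n` of `∏ⱼ C(N kⱼ + mⱼ - 1, mⱼ)`. -/
def omega (N : ℕ → ℕ) (n : ℕ) : ℕ :=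
  ∑ p : n.Partition,
    ∏ k ∈ p.parts.toFinset, Nat.choose (N k + p.parts.count k - 1) (p.parts.count k)

/-- `ω_n′` : the same sum restricted to non-trivial partitions, i.e. `ω_n - N n`. -/
def omega' (N : ℕ → ℕ) (n : ℕ) : ℕ := omega N n - N n

/-- `𝒜(s)` : arithmetic expressions ending with one of the operators in `s`. -/
def Aset (s : Set Op) : Set K := {f | IsAE f ∧ EndsIn f s}

/-- `ℱ(s)` : first-type arithmetic expressions ending with one of the operators in `s`. -/
def Fset (s : Set Op) : Set K := {f | FirstType f ∧ EndsIn f s}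

/-- `ℬ(s)` : second-type arithmetic expressions ending with one of the operators in `s`. -/
def Bset (s : Set Op) : Set K := {f | SecondType f ∧ EndsIn f s}

/-- `𝒞(s)` : third-type arithmetic expressions ending with one of the operators in `s`. -/
def Cset (s : Set Op) : Set K := {f | ThirdType f ∧ EndsIn f s}

/-- `ℳℬ(s)` : monic second-type arithmetic expressions ending with an operator in `s`. -/
def MBset (s : Set Op) : Set K := {f | SecondType f ∧ MonicAE f ∧ EndsIn f s}


/-- A decomposition of `f` as a difference `f = g - h` with `g, h ∈ 𝒜(+,×,÷)`,
`𝒱(g) ∩ 𝒱(h) = ∅`, `𝒱(g) ∪ 𝒱(h) = 𝒱(f)`, and `h` of the first type. -/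
def SubDecomp (f g h : K) : Prop :=
  IsAE g ∧ IsAE h ∧
  EndsIn g {Op.add, Op.mul, Op.div} ∧ EndsIn h {Op.add, Op.mul, Op.div} ∧
  FirstType h ∧ Disjoint (Vars g) (Vars h) ∧ Vars g ∪ Vars h = Vars f ∧ f = g - h

/-!
Two decompositions `g + h = u + v` with disjoint variables on each side have a common refinement,
as one sees by specializing the variables outside `g`, and then those outside `h`, to real values.
The pieces are determined only up to constants, but an arithmetic expression is odd with respect to
some of its variables, so at most one of its translates by constants is an expression. A product of
nonconstant functions in disjoint variables is never a sum of such functions; hence the pieces of a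
member of `𝒜(+,×,÷)` are, up to constants, again in `𝒜(+,×,÷)`.

Refine `g + (-h) = g' + (-h')`. A nonconstant piece common to `g` and `-h'` would make `-h'` an
expression, against `h'` being of the first type. So `g` is disjoint from `h'`, and likewise `g'`
from `h`; then `g - g' = h - h'` is constant, hence zero by oddness. The description of the third
type follows from this uniqueness and from the refinement of `h - g = σ·g - σ·h`.
-/

section Polynomial

variable {σ R : Type*} [CommSemiring R]

lemma vars_subset_vars_of_dvd [NoZeroDivisors R] {p q : MvPolynomial σ R} (hpq : p ∣ q)
    (hq : q ≠ 0) : p.vars ⊆ q.vars := by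
  obtain ⟨r, rfl⟩ := hpq
  intro i hi
  rw [mem_vars_iff_degreeOf_ne_zero] at hi ⊢
  rw [degreeOf_mul_eq (left_ne_zero_of_mul hq) (right_ne_zero_of_mul hq)]
  exact ne_of_gt (Nat.add_pos_left (Nat.pos_of_ne_zero hi) _)

open Classical in
/-- The substitution keeping the variables from `S` and giving each other variable `i` the
value `c i`. -/
def partialEval (S : Set σ) (c : σ → R) : MvPolynomial σ R →ₐ[R] MvPolynomial σ R :=
  bind₁ fun i => if i ∈ S then X i else C (c i)

lemma eval_partialEval (S : Set σ) (c : σ → R) (p : MvPolynomial σ R) :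
    eval c (partialEval S c p) = eval c p := by
  rw [partialEval, eval, eval₂Hom_bind₁]
  congr 2
  funext i
  split_ifs <;> simp

lemma partialEval_eq_self {S : Set σ} (c : σ → R) {p : MvPolynomial σ R} (hp : ↑p.vars ⊆ S) :
    partialEval S c p = p := by
  refine hom_congr_vars (f₁ := (partialEval S c : MvPolynomial σ R →+* MvPolynomial σ R))
    (f₂ := RingHom.id _) ?_ (fun i hi _ => ?_) rfl
  · ext r
    simp
  · simp [partialEval, hp hi]

lemma vars_partialEval_subset [Nontrivial R] (S : Set σ) (c : σ → R) (p : MvPolynomial σ R) :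
    ↑(partialEval S c p).vars ⊆ ↑p.vars ∩ S := by
  classical
  intro i hi
  obtain ⟨j, hj, hij⟩ := Finset.mem_biUnion.1 (vars_bind₁ _ p hi)
  split_ifs at hij with hjS
  · rw [vars_X, Finset.mem_singleton] at hij
    exact hij ▸ ⟨hj, hjS⟩
  · simp at hij

end Polynomial

section Vars

lemma toK_injective : Function.Injective toK := IsFractionRing.injective P K

lemma toK_ne_zero {p : P} : toK p ≠ 0 ↔ p ≠ 0 := map_ne_zero_iff toK toK_injective

lemma toK_num_div_toK_den (f : K) :
    toK (IsFractionRing.num P f) / toK (IsFractionRing.den P f) = f :=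
  IsFractionRing.mk'_num_den' P f

lemma den_ne_zero (f : K) : (IsFractionRing.den P f : P) ≠ 0 :=
  nonZeroDivisors.ne_zero (IsFractionRing.den P f).2

lemma Vars_div_subset_vars (a b : P) : Vars (toK a / toK b) ⊆ ↑a.vars ∪ ↑b.vars := by
  rintro i ⟨p, q, hq, hpq, hab, hi⟩
  by_cases hquot : toK a / toK b = 0
  · rw [hquot, eq_comm, div_eq_zero_iff, or_iff_left (toK_ne_zero.2 hq),
      map_eq_zero_iff _ toK_injective] at hab
    obtain rfl := hab
    have hunit : IsUnit q := isRelPrime_zero_left.1 hpq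
    obtain ⟨r, -, rfl⟩ := isUnit_iff_eq_C_of_isReduced.1 hunit
    simp at hi
  have ha : a ≠ 0 := by rintro rfl; simp at hquot
  have hb : b ≠ 0 := by rintro rfl; simp at hquot
  rw [div_eq_div_iff (toK_ne_zero.2 hb) (toK_ne_zero.2 hq), ← map_mul, ← map_mul] at hab
  have hcross : a * q = p * b := toK_injective hab
  have hpa : p ∣ a := hpq.dvd_of_dvd_mul_right (hcross ▸ dvd_mul_right p b)
  have hqb : q ∣ b := hpq.symm.dvd_of_dvd_mul_left (hcross ▸ dvd_mul_left q a)
  exact hi.imp (fun h => vars_subset_vars_of_dvd hpa ha h)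
    (fun h => vars_subset_vars_of_dvd hqb hb h)

lemma vars_num_subset (f : K) : ↑(IsFractionRing.num P f).vars ⊆ Vars f := fun _ hi =>
  ⟨_, _, den_ne_zero f, IsFractionRing.num_den_reduced P f, (toK_num_div_toK_den f).symm, .inl hi⟩

lemma vars_den_subset (f : K) : ↑(IsFractionRing.den P f : P).vars ⊆ Vars f := fun _ hi =>
  ⟨_, _, den_ne_zero f, IsFractionRing.num_den_reduced P f, (toK_num_div_toK_den f).symm, .inr hi⟩

lemma Vars_eq_vars_num_union_vars_den (f : K) :
    Vars f = ↑(IsFractionRing.num P f).vars ∪ ↑(IsFractionRing.den P f : P).vars := by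
  refine Set.Subset.antisymm ?_ (Set.union_subset (vars_num_subset f) (vars_den_subset f))
  conv_lhs => rw [← toK_num_div_toK_den f]
  exact Vars_div_subset_vars _ _

instance finite_Vars (f : K) : Finite (Vars f) := by
  rw [Vars_eq_vars_num_union_vars_den]
  infer_instance

/-- The field of rational functions in the variables from `S`; membership is equivalent to
`Vars f ⊆ S`, so its closure properties give the bounds on `Vars` of compound expressions. -/
def fieldOn (S : Set ℕ) : IntermediateField ℝ K :=
  IntermediateField.adjoin ℝ (Xv '' S)

lemma mem_fieldOn {S : Set ℕ} {f : K} : f ∈ fieldOn S ↔ Vars f ⊆ S := by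
  have hadjoin : Algebra.adjoin ℝ (Xv '' S) =
      (supported ℝ S).map (IsScalarTower.toAlgHom ℝ P K) := by
    rw [supported_eq_adjoin_X, AlgHom.map_adjoin, Set.image_image]
    rfl
  rw [fieldOn, IntermediateField.mem_adjoin_iff_div, hadjoin]
  constructor
  · rintro ⟨_, ⟨a, ha, rfl⟩, _, ⟨b, hb, rfl⟩, rfl⟩
    exact (Vars_div_subset_vars a b).trans
      (Set.union_subset (mem_supported.1 ha) (mem_supported.1 hb))
  · intro hf
    exact ⟨_, ⟨_, mem_supported.2 ((vars_num_subset f).trans hf), rfl⟩,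
      _, ⟨_, mem_supported.2 ((vars_den_subset f).trans hf), rfl⟩, (toK_num_div_toK_den f).symm⟩

variable {f g : K}

lemma Vars_zero : Vars 0 = ∅ :=
  Set.subset_empty_iff.1 (mem_fieldOn.1 (zero_mem _))

lemma Vars_Xv (i : ℕ) : Vars (Xv i) = {i} := by
  refine Set.Subset.antisymm
    (mem_fieldOn.1 (IntermediateField.subset_adjoin _ _ (Set.mem_image_of_mem Xv rfl))) ?_
  rintro j rfl
  exact ⟨X j, 1, one_ne_zero, isRelPrime_one_right, by simp [Xv], by simp⟩

lemma Vars_neg (f : K) : Vars (-f) = Vars f :=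
  Set.Subset.antisymm (mem_fieldOn.1 (neg_mem (mem_fieldOn.2 le_rfl)))
    (mem_fieldOn.1 (neg_mem_iff.1 (mem_fieldOn.2 le_rfl)))

lemma Vars_inv (f : K) : Vars f⁻¹ = Vars f :=
  Set.Subset.antisymm (mem_fieldOn.1 (inv_mem (mem_fieldOn.2 le_rfl)))
    (mem_fieldOn.1 (inv_mem_iff.1 (mem_fieldOn.2 le_rfl)))

lemma Vars_add_subset (f g : K) : Vars (f + g) ⊆ Vars f ∪ Vars g :=
  mem_fieldOn.1 (add_mem (mem_fieldOn.2 Set.subset_union_left)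
    (mem_fieldOn.2 Set.subset_union_right))

lemma Vars_sub_subset (f g : K) : Vars (f - g) ⊆ Vars f ∪ Vars g :=
  mem_fieldOn.1 (sub_mem (mem_fieldOn.2 Set.subset_union_left)
    (mem_fieldOn.2 Set.subset_union_right))

lemma Vars_mul_subset (f g : K) : Vars (f * g) ⊆ Vars f ∪ Vars g :=
  mem_fieldOn.1 (mul_mem (mem_fieldOn.2 Set.subset_union_left)
    (mem_fieldOn.2 Set.subset_union_right))

lemma Vars_div_subset (f g : K) : Vars (f / g) ⊆ Vars f ∪ Vars g :=
  mem_fieldOn.1 (div_mem (mem_fieldOn.2 Set.subset_union_left)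
    (mem_fieldOn.2 Set.subset_union_right))

lemma ne_zero_of_Vars_nonempty (hf : (Vars f).Nonempty) : f ≠ 0 := by
  rintro rfl
  simp [Vars_zero] at hf

lemma Vars_add (hfg : Disjoint (Vars f) (Vars g)) : Vars (f + g) = Vars f ∪ Vars g := by
  refine (Vars_add_subset f g).antisymm (Set.union_subset ?_ ?_)
  · refine hfg.subset_left_of_subset_union ?_
    simpa using Vars_sub_subset (f + g) g
  · refine hfg.symm.subset_left_of_subset_union ?_
    simpa using Vars_sub_subset (f + g) f

lemma Vars_sub (hfg : Disjoint (Vars f) (Vars g)) : Vars (f - g) = Vars f ∪ Vars g := by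
  rw [sub_eq_add_neg, Vars_add (by rwa [Vars_neg]), Vars_neg]

lemma Vars_mul (hfg : Disjoint (Vars f) (Vars g)) (hf : f ≠ 0) (hg : g ≠ 0) :
    Vars (f * g) = Vars f ∪ Vars g := by
  refine (Vars_mul_subset f g).antisymm (Set.union_subset ?_ ?_)
  · refine hfg.subset_left_of_subset_union ?_
    simpa [hg] using Vars_div_subset (f * g) g
  · refine hfg.symm.subset_left_of_subset_union ?_
    simpa [hf] using Vars_div_subset (f * g) f

lemma Vars_div (hfg : Disjoint (Vars f) (Vars g)) (hf : f ≠ 0) (hg : g ≠ 0) :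
    Vars (f / g) = Vars f ∪ Vars g := by
  rw [div_eq_mul_inv, Vars_mul (by rwa [Vars_inv]) hf (inv_ne_zero hg), Vars_inv]

end Vars

section Homomorphisms

variable {L : Type*} [Field L] [Algebra ℝ L] {φ ψ : K →ₐ[ℝ] L}

lemma algHom_eqOn_fieldOn {S : Set ℕ} (h : ∀ i ∈ S, φ (Xv i) = ψ (Xv i)) :
    Set.EqOn φ ψ (fieldOn S) := by
  intro f hf
  induction hf using IntermediateField.adjoin_induction with
  | mem _ hx =>
    obtain ⟨i, hi, rfl⟩ := hx
    exact h i hi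
  | algebraMap c => rw [AlgHom.commutes, AlgHom.commutes]
  | add _ _ _ _ hx hy => rw [map_add, map_add, hx, hy]
  | inv _ _ hx => rw [map_inv₀, map_inv₀, hx]
  | mul _ _ _ _ hx hy => rw [map_mul, map_mul, hx, hy]

lemma algHom_eq_of_eqOn_Vars {f : K} (h : ∀ i ∈ Vars f, φ (Xv i) = ψ (Xv i)) : φ f = ψ f :=
  algHom_eqOn_fieldOn h (mem_fieldOn.2 le_rfl)

variable {f g : K}

/-- The action of a permutation of the variables, as an automorphism over `ℝ`. -/
def permAlgEquiv (σ : Equiv.Perm ℕ) : K ≃ₐ[ℝ] K :=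
  IsFractionRing.algEquivOfAlgEquiv (renameEquiv ℝ σ)

lemma permAlgEquiv_apply (σ : Equiv.Perm ℕ) (f : K) : permAlgEquiv σ f = permAct σ f := rfl

lemma permAct_Xv (σ : Equiv.Perm ℕ) (i : ℕ) : permAct σ (Xv i) = Xv (σ i) := by
  rw [permAct, Xv, toK, IsFractionRing.ringEquivOfRingEquiv_algebraMap]
  exact congrArg _ (rename_X σ i)

lemma permAct_congr {σ τ : Equiv.Perm ℕ} (h : ∀ i ∈ Vars f, σ i = τ i) :
    permAct σ f = permAct τ f :=
  algHom_eq_of_eqOn_Vars (φ := (permAlgEquiv σ).toAlgHom) (ψ := (permAlgEquiv τ).toAlgHom)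
    fun i hi => by simp [permAlgEquiv_apply, permAct_Xv, h i hi]

lemma permAct_mul (σ τ : Equiv.Perm ℕ) (f : K) :
    permAct (σ * τ) f = permAct σ (permAct τ f) :=
  algHom_eq_of_eqOn_Vars (φ := (permAlgEquiv (σ * τ)).toAlgHom)
    (ψ := ((permAlgEquiv σ).toAlgHom).comp (permAlgEquiv τ).toAlgHom)
    fun i _ => by simp [permAlgEquiv_apply, permAct_Xv]

lemma permAct_one (f : K) : permAct 1 f = f :=
  algHom_eq_of_eqOn_Vars (φ := (permAlgEquiv 1).toAlgHom) (ψ := AlgHom.id ℝ K)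
    fun i _ => permAct_Xv 1 i

lemma permAct_inv_permAct (σ : Equiv.Perm ℕ) (f : K) : permAct σ⁻¹ (permAct σ f) = f := by
  rw [← permAct_mul, inv_mul_cancel, permAct_one]

lemma permAct_eq_self {σ : Equiv.Perm ℕ} (h : ∀ i ∈ Vars f, σ i = i) : permAct σ f = f :=
  (permAct_congr (τ := 1) h).trans (permAct_one f)

lemma Vars_permAct_subset (σ : Equiv.Perm ℕ) (f : K) : Vars (permAct σ f) ⊆ σ '' Vars f := by
  have himage : (permAlgEquiv σ).toAlgHom '' (Xv '' Vars f) = Xv '' (σ '' Vars f) := by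
    rw [Set.image_image, Set.image_image]
    exact Set.image_congr fun i _ => permAct_Xv σ i
  rw [← mem_fieldOn, fieldOn, ← himage, ← IntermediateField.adjoin_map]
  exact ⟨f, mem_fieldOn.2 le_rfl, rfl⟩

lemma Vars_permAct (σ : Equiv.Perm ℕ) (f : K) : Vars (permAct σ f) = σ '' Vars f := by
  refine (Vars_permAct_subset σ f).antisymm ?_
  rw [Set.image_subset_iff, ← Equiv.image_symm_eq_preimage, ← Equiv.Perm.inv_def]
  simpa only [permAct_inv_permAct] using Vars_permAct_subset σ⁻¹ (permAct σ f)

lemma ncard_Vars_permAct (σ : Equiv.Perm ℕ) (f : K) :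
    (Vars (permAct σ f)).ncard = (Vars f).ncard := by
  rw [Vars_permAct, Set.ncard_image_of_injective _ σ.injective]

lemma disjoint_Vars_permAct (σ : Equiv.Perm ℕ) (h : Disjoint (Vars f) (Vars g)) :
    Disjoint (Vars (permAct σ f)) (Vars (permAct σ g)) := by
  rw [Vars_permAct, Vars_permAct]
  exact (Set.disjoint_image_iff σ.injective).2 h

open Classical in
/-- The endomorphism of `P` that changes the sign of the variables in `T`. -/
def polyNegOn (T : Set ℕ) : P →ₐ[ℝ] P :=
  aeval fun i => if i ∈ T then -X i else X i

lemma polyNegOn_comp_self (T : Set ℕ) :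
    (polyNegOn T).comp (polyNegOn T) = AlgHom.id ℝ P := by
  refine algHom_ext fun i => ?_
  by_cases hi : i ∈ T <;> simp [polyNegOn, hi]

/-- The automorphism of `K` that changes the sign of the variables in `T`. -/
def negOn (T : Set ℕ) : K ≃ₐ[ℝ] K :=
  IsFractionRing.algEquivOfAlgEquiv (AlgEquiv.ofAlgHom (polyNegOn T) (polyNegOn T)
    (polyNegOn_comp_self T) (polyNegOn_comp_self T))

open Classical in
lemma negOn_Xv (T : Set ℕ) (i : ℕ) : negOn T (Xv i) = if i ∈ T then -Xv i else Xv i := by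
  refine (IsFractionRing.algEquivOfAlgEquiv_algebraMap _ (X i)).trans ?_
  change toK (polyNegOn T (X i)) = _
  split_ifs with hi <;> simp [polyNegOn, Xv, hi]

lemma negOn_congr {S T : Set ℕ} (h : Vars f ∩ S = Vars f ∩ T) : negOn S f = negOn T f :=
  algHom_eq_of_eqOn_Vars (φ := (negOn S).toAlgHom) (ψ := (negOn T).toAlgHom) fun i hi => by
    have hmem : i ∈ S ↔ i ∈ T := by simpa [hi] using Set.ext_iff.1 h i
    by_cases hT : i ∈ T <;> simp [negOn_Xv, hmem, hT]

lemma negOn_eq_self {T : Set ℕ} (h : Disjoint (Vars f) T) : negOn T f = f :=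
  algHom_eq_of_eqOn_Vars (φ := (negOn T).toAlgHom) (ψ := AlgHom.id ℝ K) fun i hi => by
    simp [negOn_Xv, Set.disjoint_left.1 h hi]

lemma negOn_comm (S T : Set ℕ) (f : K) : negOn S (negOn T f) = negOn T (negOn S f) :=
  algHom_eq_of_eqOn_Vars (φ := (negOn S).toAlgHom.comp (negOn T).toAlgHom)
    (ψ := (negOn T).toAlgHom.comp (negOn S).toAlgHom) fun i _ => by
    by_cases hS : i ∈ S <;> by_cases hT : i ∈ T <;> simp [negOn_Xv, hS, hT]

end Homomorphisms

section ArithmeticExpressions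

variable {f g h : K} {o : Op}

lemma IsAE.Vars_nonempty (hf : IsAE f) : (Vars f).Nonempty := by
  induction hf with
  | var i => exact Vars_Xv i ▸ Set.singleton_nonempty i
  | add _ _ hd ihg _ => exact Vars_add hd ▸ ihg.inl
  | sub _ _ hd ihg _ => exact Vars_sub hd ▸ ihg.inl
  | mul _ _ hd ihg ihh =>
    exact Vars_mul hd (ne_zero_of_Vars_nonempty ihg) (ne_zero_of_Vars_nonempty ihh) ▸ ihg.inl
  | div _ _ hd ihg ihh =>
    exact Vars_div hd (ne_zero_of_Vars_nonempty ihg) (ne_zero_of_Vars_nonempty ihh) ▸ ihg.inl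

lemma IsAE.ne_zero (hf : IsAE f) : f ≠ 0 := ne_zero_of_Vars_nonempty hf.Vars_nonempty

lemma not_subsingleton_union_of_disjoint {α : Type*} {s t : Set α} (hst : Disjoint s t)
    (hs : s.Nonempty) (ht : t.Nonempty) : ¬ (s ∪ t).Subsingleton := by
  obtain ⟨a, ha⟩ := hs
  obtain ⟨b, hb⟩ := ht
  exact fun h => hst.ne_of_mem ha hb (h (.inl ha) (.inr hb))

lemma IsAE.exists_eq_Xv (hf : IsAE f) (hsub : (Vars f).Subsingleton) : ∃ i, f = Xv i := by
  cases hf with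
  | var i => exact ⟨i, rfl⟩
  | add hg hh hd =>
    exact absurd (Vars_add hd ▸ hsub)
      (not_subsingleton_union_of_disjoint hd hg.Vars_nonempty hh.Vars_nonempty)
  | sub hg hh hd =>
    exact absurd (Vars_sub hd ▸ hsub)
      (not_subsingleton_union_of_disjoint hd hg.Vars_nonempty hh.Vars_nonempty)
  | mul hg hh hd =>
    exact absurd (Vars_mul hd hg.ne_zero hh.ne_zero ▸ hsub)
      (not_subsingleton_union_of_disjoint hd hg.Vars_nonempty hh.Vars_nonempty)
  | div hg hh hd =>
    exact absurd (Vars_div hd hg.ne_zero hh.ne_zero ▸ hsub)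
      (not_subsingleton_union_of_disjoint hd hg.Vars_nonempty hh.Vars_nonempty)

lemma firstType_Xv (i : ℕ) : FirstType (Xv i) := by
  refine ⟨.var i, fun hneg => ?_⟩
  have hVars : Vars (-Xv i) = {i} := by rw [Vars_neg, Vars_Xv]
  obtain ⟨j, hj⟩ := hneg.exists_eq_Xv (hVars ▸ Set.subsingleton_singleton)
  obtain rfl : j = i := by rwa [hj, Vars_Xv, Set.singleton_eq_singleton_iff] at hVars
  exact (IsAE.var j).ne_zero (neg_eq_self.1 hj)

lemma disjoint_Vars_Xv {i j : ℕ} (hij : i ≠ j) : Disjoint (Vars (Xv i)) (Vars (Xv j)) := by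
  rwa [Vars_Xv, Vars_Xv, Set.disjoint_singleton]

lemma EndsWith.isAE (hf : EndsWith f o) : IsAE f := by
  cases hf with
  | var i => exact .var i
  | add_base hij => exact (IsAE.var _).add (.var _) (disjoint_Vars_Xv hij)
  | sub_base hij => exact (IsAE.var _).sub (.var _) (disjoint_Vars_Xv hij)
  | mul_base hij => exact (IsAE.var _).mul (.var _) (disjoint_Vars_Xv hij)
  | div_base hij => exact (IsAE.var _).div (.var _) (disjoint_Vars_Xv hij)
  | add_rec hg hh hd => exact hg.add hh hd
  | mul_rec hg hh hd => exact hg.mul hh hd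
  | div_rec hg hh hd => exact hg.div hh hd
  | sub_rec hg hh hd => exact hg.sub hh hd

lemma IsAE.map_permAct (σ : Equiv.Perm ℕ) (hf : IsAE f) : IsAE (permAct σ f) := by
  induction hf with
  | var i => exact permAct_Xv σ i ▸ .var _
  | add _ _ hd ihg ihh =>
    rw [map_add]
    exact ihg.add ihh (disjoint_Vars_permAct σ hd)
  | sub _ _ hd ihg ihh =>
    rw [map_sub]
    exact ihg.sub ihh (disjoint_Vars_permAct σ hd)
  | mul _ _ hd ihg ihh =>
    rw [map_mul]
    exact ihg.mul ihh (disjoint_Vars_permAct σ hd)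
  | div _ _ hd ihg ihh =>
    rw [map_div₀]
    exact ihg.div ihh (disjoint_Vars_permAct σ hd)

lemma FirstType.map_permAct (σ : Equiv.Perm ℕ) (hf : FirstType f) : FirstType (permAct σ f) := by
  refine ⟨hf.1.map_permAct σ, fun hneg => hf.2 ?_⟩
  simpa only [map_neg, permAct_inv_permAct] using hneg.map_permAct σ⁻¹

lemma EndsWith.map_permAct (σ : Equiv.Perm ℕ) (hf : EndsWith f o) : EndsWith (permAct σ f) o := by
  induction hf with
  | var i => exact permAct_Xv σ i ▸ .var _
  | add_base hij =>
    rw [map_add, permAct_Xv, permAct_Xv]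
    exact .add_base (σ.injective.ne hij)
  | sub_base hij =>
    rw [map_sub, permAct_Xv, permAct_Xv]
    exact .sub_base (σ.injective.ne hij)
  | mul_base hij =>
    rw [map_mul, permAct_Xv, permAct_Xv]
    exact .mul_base (σ.injective.ne hij)
  | div_base hij =>
    rw [map_div₀, permAct_Xv, permAct_Xv]
    exact .div_base (σ.injective.ne hij)
  | add_rec hg hh hd h3 ho₁ ho₂ _ _ ihg ihh =>
    rw [← ncard_Vars_permAct σ, map_add] at h3
    rw [map_add]
    exact .add_rec (hg.map_permAct σ) (hh.map_permAct σ) (disjoint_Vars_permAct σ hd) h3 ho₁ ho₂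
      ihg ihh
  | mul_rec hg hh hd h3 ho₁ ho₂ _ _ ihg ihh =>
    rw [← ncard_Vars_permAct σ, map_mul] at h3
    rw [map_mul]
    exact .mul_rec (hg.map_permAct σ) (hh.map_permAct σ) (disjoint_Vars_permAct σ hd) h3 ho₁ ho₂
      ihg ihh
  | div_rec hg hh hd h3 ho₁ ho₂ _ _ ihg ihh =>
    rw [← ncard_Vars_permAct σ, map_div₀] at h3
    rw [map_div₀]
    exact .div_rec (hg.map_permAct σ) (hh.map_permAct σ) (disjoint_Vars_permAct σ hd) h3 ho₁ ho₂
      ihg ihh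
  | sub_rec hg hh hd h3 ho₁ ho₂ hfirst _ _ ihg ihh =>
    rw [← ncard_Vars_permAct σ, map_sub] at h3
    rw [map_sub]
    exact .sub_rec (hg.map_permAct σ) (hh.map_permAct σ) (disjoint_Vars_permAct σ hd) h3 ho₁ ho₂
      (hfirst.map_permAct σ) ihg ihh

/-- `f ∈ 𝒜(+,×,÷)`: the expressions admitted on either side of a difference. -/
def IsSummand (f : K) : Prop := EndsIn f {Op.add, Op.mul, Op.div}

lemma mem_add_mul_div_iff : o ∈ ({Op.add, Op.mul, Op.div} : Set Op) ↔ o ≠ Op.sub := by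
  cases o <;> simp

lemma IsSummand.isAE (hf : IsSummand f) : IsAE f :=
  let ⟨_, _, hf⟩ := hf
  hf.isAE

lemma IsSummand.map_permAct (σ : Equiv.Perm ℕ) (hf : IsSummand f) : IsSummand (permAct σ f) :=
  let ⟨o, ho, hf⟩ := hf
  ⟨o, ho, hf.map_permAct σ⟩

lemma isSummand_Xv (i : ℕ) : IsSummand (Xv i) := ⟨Op.mul, by simp, .var i⟩

lemma IsSummand.add (hg : IsSummand g) (hh : IsSummand h) (hd : Disjoint (Vars g) (Vars h)) :
    IsSummand (g + h) := by
  refine ⟨Op.add, by simp, ?_⟩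
  by_cases h3 : 3 ≤ (Vars (g + h)).ncard
  · obtain ⟨_, ho₁, hg⟩ := hg
    obtain ⟨_, ho₂, hh⟩ := hh
    exact .add_rec hg.isAE hh.isAE hd h3 (mem_add_mul_div_iff.1 ho₁) (mem_add_mul_div_iff.1 ho₂)
      hg hh
  · rw [Vars_add hd, Set.ncard_union_eq hd] at h3
    have hg0 := (Set.ncard_pos).2 hg.isAE.Vars_nonempty
    have hh0 := (Set.ncard_pos).2 hh.isAE.Vars_nonempty
    obtain ⟨i, rfl⟩ := hg.isAE.exists_eq_Xv (Set.ncard_le_one_iff_subsingleton.1 (by lia))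
    obtain ⟨j, rfl⟩ := hh.isAE.exists_eq_Xv (Set.ncard_le_one_iff_subsingleton.1 (by lia))
    exact .add_base fun hij => by simp [hij, Vars_Xv] at hd

end ArithmeticExpressions

section Oddness

variable {f g : K}

/-- Changing the sign of suitable variables of `f` changes the sign of `f`. Every arithmetic
expression has this property, and it is destroyed by adding a nonzero constant. -/
def IsOdd (f : K) : Prop := ∃ T ⊆ Vars f, negOn T f = -f

lemma negOn_union_left {S T : Set ℕ} (hT : Disjoint (Vars f) T) : negOn (S ∪ T) f = negOn S f :=
  negOn_congr (by rw [Set.inter_union_distrib_left, hT.inter_eq, Set.union_empty])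

lemma negOn_union_right {S T : Set ℕ} (hS : Disjoint (Vars f) S) : negOn (S ∪ T) f = negOn T f := by
  rw [Set.union_comm, negOn_union_left hS]

lemma IsOdd.neg (hf : IsOdd f) : IsOdd (-f) := by
  obtain ⟨T, hT, hf⟩ := hf
  exact ⟨T, by rwa [Vars_neg], by rw [map_neg, hf]⟩

lemma IsOdd.add (hf : IsOdd f) (hg : IsOdd g) (hd : Disjoint (Vars f) (Vars g)) :
    IsOdd (f + g) := by
  obtain ⟨S, hS, hf⟩ := hf
  obtain ⟨T, hT, hg⟩ := hg
  refine ⟨S ∪ T, Vars_add hd ▸ Set.union_subset_union hS hT, ?_⟩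
  rw [map_add, negOn_union_left (hd.mono_right hT), negOn_union_right (hd.symm.mono_right hS),
    hf, hg, neg_add]

lemma IsOdd.mul (hf : IsOdd f) (hd : Disjoint (Vars f) (Vars g)) (hf0 : f ≠ 0) (hg0 : g ≠ 0) :
    IsOdd (f * g) := by
  obtain ⟨S, hS, hf⟩ := hf
  refine ⟨S, Vars_mul hd hf0 hg0 ▸ hS.trans Set.subset_union_left, ?_⟩
  rw [map_mul, hf, negOn_eq_self (hd.symm.mono_right hS), neg_mul]

lemma IsAE.isOdd (hf : IsAE f) : IsOdd f := by
  induction hf with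
  | var i => exact ⟨{i}, (Vars_Xv i).ge, by simp [negOn_Xv]⟩
  | add _ _ hd ihg ihh => exact ihg.add ihh hd
  | sub _ _ hd ihg ihh => exact sub_eq_add_neg (_ : K) _ ▸ ihg.add ihh.neg (by rwa [Vars_neg])
  | mul hg hh hd ihg _ => exact ihg.mul hd hg.ne_zero hh.ne_zero
  | div hg hh hd ihg _ =>
    exact div_eq_mul_inv (_ : K) _ ▸
      ihg.mul (by rwa [Vars_inv]) hg.ne_zero (inv_ne_zero hh.ne_zero)

lemma IsOdd.eq_of_Vars_sub_eq_empty (hf : IsOdd f) (hg : IsOdd g) (hfg : Vars (f - g) = ∅) :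
    f = g := by
  obtain ⟨S, -, hf⟩ := hf
  obtain ⟨T, -, hg⟩ := hg
  have hconst : ∀ U, negOn U (f - g) = f - g := fun U => negOn_eq_self (by simp [hfg])
  have hTf : negOn T f = f - g - g := by
    rw [← hconst T, map_sub, hg]
    ring
  have hSg : negOn S g = g - f - f := by
    rw [← neg_sub f g, ← hconst S, map_sub, hf]
    ring
  have hcomm := negOn_comm S T f
  rw [hTf, hf, map_neg, hTf, map_sub, hconst, hSg] at hcomm
  linear_combination hcomm / 4

end Oddness

section Product

lemma image_swap_subset {α : Type*} [DecidableEq α] (a b : α) (s : Set α) :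
    Equiv.swap a b '' s ⊆ s ∪ {a, b} := by
  rintro _ ⟨i, hi, rfl⟩
  rw [Equiv.swap_apply_def]
  split_ifs <;> simp [hi]

variable {g h u v : K}

-- Moving `a` to a fresh variable and subtracting eliminates `v` and exhibits `h` as a quotient of
-- differences of `u` and `g`.
lemma Vars_subset_of_mul_eq_add (hgh : Disjoint (Vars g) (Vars h)) (heq : g * h = u + v) {a : ℕ}
    (hag : a ∈ Vars g) (hav : a ∉ Vars v) : Vars h ⊆ Vars u := by
  obtain ⟨z, hz⟩ := ((Vars g ∪ Vars h ∪ Vars v).toFinite).exists_notMem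
  obtain ⟨⟨hzg, hzh⟩, hzv⟩ : (z ∉ Vars g ∧ z ∉ Vars h) ∧ z ∉ Vars v := by
    simpa only [Set.mem_union, not_or] using hz
  have hah : a ∉ Vars h := Set.disjoint_left.1 hgh hag
  set τ := Equiv.swap a z
  have permAct_of_notMem : ∀ {w}, a ∉ Vars w → z ∉ Vars w → permAct τ w = w := fun ha hz =>
    permAct_eq_self fun i hi =>
      Equiv.swap_apply_of_ne_of_ne (ne_of_mem_of_not_mem hi ha) (ne_of_mem_of_not_mem hi hz)
  have hne : permAct τ g - g ≠ 0 := fun h0 => hzg <| by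
    rw [← sub_eq_zero.1 h0, Vars_permAct]
    exact ⟨a, hag, Equiv.swap_apply_left a z⟩
  have hmoved := congrArg (permAct τ) heq
  rw [map_mul, map_add, permAct_of_notMem hah hzh, permAct_of_notMem hav hzv] at hmoved
  have hquot : h = (permAct τ u - u) / (permAct τ g - g) := by
    rw [eq_div_iff hne]
    linear_combination hmoved - heq
  have hdiff (w : K) : Vars (permAct τ w - w) ⊆ Vars w ∪ {a, z} := by
    refine (Vars_sub_subset _ _).trans (Set.union_subset ?_ Set.subset_union_left)
    exact Vars_permAct τ w ▸ image_swap_subset a z _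
  have hcover : Vars h ⊆ Vars u ∪ (Vars g ∪ {a, z}) := by
    rw [hquot]
    refine (Vars_div_subset _ _).trans ((Set.union_subset_union (hdiff u) (hdiff g)).trans ?_)
    exact Set.union_subset (Set.union_subset_union_right _ Set.subset_union_right)
      Set.subset_union_right
  refine Disjoint.subset_left_of_subset_union hcover ?_
  simp [hgh.symm, hah, hzh]

lemma mul_ne_add (hgh : Disjoint (Vars g) (Vars h)) (hg : (Vars g).Nonempty)
    (hh : (Vars h).Nonempty) (huv : Disjoint (Vars u) (Vars v)) (hu : (Vars u).Nonempty)
    (hv : (Vars v).Nonempty) : g * h ≠ u + v := by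
  intro heq
  have hVars : Vars g ∪ Vars h = Vars u ∪ Vars v := by
    rw [← Vars_mul hgh (ne_zero_of_Vars_nonempty hg) (ne_zero_of_Vars_nonempty hh), heq,
      Vars_add huv]
  obtain ⟨a, hag⟩ := hg
  wlog hau : a ∈ Vars u generalizing u v
  · have hav : a ∈ Vars v := (hVars ▸ Or.inl hag : a ∈ Vars u ∪ Vars v).resolve_left hau
    exact this huv.symm hv hu (add_comm u v ▸ heq) (hVars.trans (Set.union_comm _ _)) hav
  have hhu := Vars_subset_of_mul_eq_add hgh heq hag (Set.disjoint_left.1 huv hau)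
  obtain ⟨b, hbh⟩ := hh
  have hgu := Vars_subset_of_mul_eq_add hgh.symm (mul_comm g h ▸ heq) hbh
    (Set.disjoint_left.1 huv (hhu hbh))
  have hvu : Vars v ⊆ Vars u :=
    Set.subset_union_right.trans (hVars.ge.trans (Set.union_subset hgu hhu))
  obtain ⟨d, hdv⟩ := hv
  exact Set.disjoint_left.1 huv (hvu hdv) hdv

end Product

section Refinement

variable {f g h u v : K} {S : Set ℕ} {c : ℕ → ℝ}

/-- The rational function obtained from `f` by giving each variable `i` outside `S` the value
`c i`. It is meaningful only when `RegularAt c f`, since otherwise the substituted denominator may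
vanish. -/
def specialize (S : Set ℕ) (c : ℕ → ℝ) (f : K) : K :=
  toK (partialEval S c (IsFractionRing.num P f)) / toK (partialEval S c (IsFractionRing.den P f))

/-- The reduced denominator of `f` does not vanish at the point `c`. -/
def RegularAt (c : ℕ → ℝ) (f : K) : Prop :=
  eval c (IsFractionRing.den P f : P) ≠ 0

lemma exists_regularAt (s : Finset K) : ∃ c, ∀ f ∈ s, RegularAt c f := by
  have hprod : ∏ f ∈ s, (IsFractionRing.den P f : P) ≠ 0 :=
    Finset.prod_ne_zero_iff.2 fun f _ => den_ne_zero f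
  obtain ⟨c, hc⟩ : ∃ c, eval c (∏ f ∈ s, (IsFractionRing.den P f : P)) ≠ 0 := by
    by_contra! hall
    exact hprod (MvPolynomial.funext (by simpa using hall))
  rw [map_prod, Finset.prod_ne_zero_iff] at hc
  exact ⟨c, hc⟩

lemma toK_partialEval_ne_zero {p : P} (hp : eval c p ≠ 0) : toK (partialEval S c p) ≠ 0 := by
  rw [toK_ne_zero]
  intro h0
  rw [← eval_partialEval S, h0, map_zero] at hp
  exact hp rfl

lemma specialize_div {a b : P} (hb : eval c b ≠ 0) :
    specialize S c (toK a / toK b) = toK (partialEval S c a) / toK (partialEval S c b) := by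
  have hb0 : toK b ≠ 0 := toK_ne_zero.2 fun h0 => hb (by rw [h0, map_zero])
  set f := toK a / toK b
  have hcross : IsFractionRing.num P f * b = a * IsFractionRing.den P f := by
    apply toK_injective
    rw [map_mul, map_mul, ← div_eq_div_iff (toK_ne_zero.2 (den_ne_zero f)) hb0,
      toK_num_div_toK_den]
  have hdvd : (IsFractionRing.den P f : P) ∣ b :=
    (IsFractionRing.num_den_reduced P f).symm.dvd_of_dvd_mul_left (hcross ▸ dvd_mul_left _ a)
  have hreg : RegularAt c f := ne_zero_of_dvd_ne_zero hb (map_dvd (eval c) hdvd)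
  rw [specialize, div_eq_div_iff (toK_partialEval_ne_zero hreg) (toK_partialEval_ne_zero hb),
    ← map_mul, ← map_mul, ← map_mul, ← map_mul, hcross]

lemma specialize_add (hf : RegularAt c f) (hg : RegularAt c g) :
    specialize S c (f + g) = specialize S c f + specialize S c g := by
  have hsum : f + g =
      toK (IsFractionRing.num P f * IsFractionRing.den P g +
        IsFractionRing.den P f * IsFractionRing.num P g) /
      toK (IsFractionRing.den P f * IsFractionRing.den P g) := by
    rw [map_add, map_mul, map_mul, map_mul, ← div_add_div _ _ (toK_ne_zero.2 (den_ne_zero f))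
      (toK_ne_zero.2 (den_ne_zero g)), toK_num_div_toK_den, toK_num_div_toK_den]
  rw [hsum, specialize_div (by simpa using ⟨hf, hg⟩), specialize, specialize,
    div_add_div _ _ (toK_partialEval_ne_zero hf) (toK_partialEval_ne_zero hg)]
  simp only [map_add, map_mul]

lemma specialize_eq_self (hf : Vars f ⊆ S) : specialize S c f = f := by
  rw [specialize, partialEval_eq_self c ((vars_num_subset f).trans hf),
    partialEval_eq_self c ((vars_den_subset f).trans hf), toK_num_div_toK_den]

lemma Vars_specialize_subset : Vars (specialize S c f) ⊆ Vars f ∩ S := by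
  refine (Vars_div_subset_vars _ _).trans (Set.union_subset ?_ ?_)
  · exact (vars_partialEval_subset S c _).trans (Set.inter_subset_inter_left S (vars_num_subset f))
  · exact (vars_partialEval_subset S c _).trans (Set.inter_subset_inter_left S (vars_den_subset f))

-- Specialize the variables outside `g`: this fixes `g` and turns `h` into a constant.
lemma exists_eq_add_of_add_eq_add (hgh : Disjoint (Vars g) (Vars h)) (heq : g + h = u + v) :
    ∃ p q, g = p + q ∧ Vars p ⊆ Vars g ∩ Vars u ∧ Vars q ⊆ Vars g ∩ Vars v := by
  classical
  obtain ⟨c, hc⟩ := exists_regularAt {g, h, u, v}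
  have hspec : g + specialize (Vars g) c h = specialize (Vars g) c u + specialize (Vars g) c v := by
    rw [← specialize_add (hc u (by simp)) (hc v (by simp)), ← heq,
      specialize_add (hc g (by simp)) (hc h (by simp)), specialize_eq_self le_rfl]
  have hconst : Vars (specialize (Vars g) c h) = ∅ :=
    Set.subset_empty_iff.1 (hgh.symm.inter_eq ▸ Vars_specialize_subset)
  refine ⟨specialize (Vars g) c u, specialize (Vars g) c v - specialize (Vars g) c h,
    by linear_combination hspec, ?_, ?_⟩
  · exact Set.inter_comm _ _ ▸ Vars_specialize_subset
  · refine (Vars_sub_subset _ _).trans ?_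
    rw [hconst, Set.union_empty, Set.inter_comm]
    exact Vars_specialize_subset

lemma Vars_add_eq_left (hc : Vars h = ∅) : Vars (g + h) = Vars g := by
  rw [Vars_add (hc ▸ Set.disjoint_empty _), hc, Set.union_empty]

lemma Vars_sub_eq_left (hc : Vars h = ∅) : Vars (g - h) = Vars g := by
  rw [Vars_sub (hc ▸ Set.disjoint_empty _), hc, Set.union_empty]

lemma exists_refinement (hgh : Disjoint (Vars g) (Vars h)) (huv : Disjoint (Vars u) (Vars v))
    (heq : g + h = u + v) :
    ∃ p q r s, g = p + q ∧ h = r + s ∧ u = p + r ∧ v = q + s ∧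
      Vars p ⊆ Vars g ∩ Vars u ∧ Vars q ⊆ Vars g ∩ Vars v ∧
      Vars r ⊆ Vars h ∩ Vars u ∧ Vars s ⊆ Vars h ∩ Vars v := by
  obtain ⟨p, q, rfl, hp, hq⟩ := exists_eq_add_of_add_eq_add hgh heq
  obtain ⟨r, s, rfl, hr, hs⟩ := exists_eq_add_of_add_eq_add hgh.symm ((add_comm _ _).trans heq)
  -- `p + r` and `u` differ by a constant, which is absorbed in `r` and `s`.
  have hconst : Vars (u - p - r) = ∅ := by
    have hVu : Vars (u - p - r) ⊆ Vars u :=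
      (Vars_sub_subset _ _).trans (Set.union_subset ((Vars_sub_subset _ _).trans
        (Set.union_subset le_rfl fun _ hi => (hp hi).2)) fun _ hi => (hr hi).2)
    have hVv : Vars (u - p - r) ⊆ Vars v := by
      rw [show u - p - r = q + s - v by linear_combination -heq]
      exact (Vars_sub_subset _ _).trans (Set.union_subset ((Vars_add_subset _ _).trans
        (Set.union_subset (fun _ hi => (hq hi).2) fun _ hi => (hs hi).2)) le_rfl)
    exact Set.subset_empty_iff.1 (huv hVu hVv)
  refine ⟨p, q, r + (u - p - r), s - (u - p - r), rfl, by ring, by ring,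
    by linear_combination -heq, hp, hq, ?_, ?_⟩
  · rwa [Vars_add_eq_left hconst]
  · rwa [Vars_sub_eq_left hconst]

end Refinement

section Splitting

variable {f g h u v : K}

/-- `f` is `0` or lies in `𝒜(+,×,÷)`; the value `0` stands for an empty sum of pieces. -/
def IsSummandOrZero (f : K) : Prop := f = 0 ∨ IsSummand f

lemma IsSummandOrZero.isSummand (hf : IsSummandOrZero f) (hne : (Vars f).Nonempty) :
    IsSummand f :=
  hf.resolve_left (ne_zero_of_Vars_nonempty hne)

lemma IsSummandOrZero.isOdd (hf : IsSummandOrZero f) : IsOdd f := by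
  obtain rfl | hf := hf
  · exact ⟨∅, Set.empty_subset _, by simp⟩
  · exact hf.isAE.isOdd

lemma IsSummandOrZero.add (hf : IsSummandOrZero f) (hg : IsSummandOrZero g)
    (hd : Disjoint (Vars f) (Vars g)) : IsSummandOrZero (f + g) := by
  obtain rfl | hf := hf
  · rwa [zero_add]
  obtain rfl | hg := hg
  · exact .inr (by rwa [add_zero])
  · exact .inr (hf.add hg hd)

/-- Whenever `f` is a sum of two functions with disjoint variables, both belong to
`𝒜(+,×,÷) ∪ {0}` after moving a suitable constant `c` from one to the other. -/
def SplitsIntoSummands (f : K) : Prop :=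
  ∀ ⦃u v⦄, Disjoint (Vars u) (Vars v) → f = u + v →
    ∃ c, Vars c = ∅ ∧ IsSummandOrZero (u + c) ∧ IsSummandOrZero (v - c)

lemma IsSummand.splitsIntoSummands_of_indecomposable (hf : IsSummand f)
    (hind : ∀ ⦃u v⦄, Disjoint (Vars u) (Vars v) → f = u + v → Vars u = ∅ ∨ Vars v = ∅) :
    SplitsIntoSummands f := by
  rintro u v huv rfl
  obtain hu | hv := hind huv rfl
  · exact ⟨-u, by rwa [Vars_neg], .inl (add_neg_cancel u), .inr (by rwa [sub_neg_eq_add, add_comm])⟩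
  · exact ⟨v, hv, .inr hf, .inl (sub_self v)⟩

lemma splitsIntoSummands_Xv (i : ℕ) : SplitsIntoSummands (Xv i) := by
  refine (isSummand_Xv i).splitsIntoSummands_of_indecomposable fun u v huv heq => ?_
  by_contra! hne
  have hunion : Vars u ∪ Vars v = {i} := by rw [← Vars_add huv, ← heq, Vars_Xv]
  exact not_subsingleton_union_of_disjoint huv hne.1 hne.2
    (hunion ▸ Set.subsingleton_singleton)

lemma splitsIntoSummands_mul (hgh : IsSummand (g * h)) (hg : IsAE g) (hh : (Vars h).Nonempty)
    (hd : Disjoint (Vars g) (Vars h)) : SplitsIntoSummands (g * h) := by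
  refine hgh.splitsIntoSummands_of_indecomposable fun u v huv heq => ?_
  by_contra! hne
  exact mul_ne_add hd hg.Vars_nonempty hh huv hne.1 hne.2 heq

lemma splitsIntoSummands_div (hgh : IsSummand (g / h)) (hg : IsAE g) (hh : IsAE h)
    (hd : Disjoint (Vars g) (Vars h)) : SplitsIntoSummands (g / h) := by
  rw [div_eq_mul_inv] at hgh ⊢
  exact splitsIntoSummands_mul hgh hg (by simpa only [Vars_inv] using hh.Vars_nonempty)
    (by rwa [Vars_inv])

lemma SplitsIntoSummands.add (hg : SplitsIntoSummands g) (hh : SplitsIntoSummands h)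
    (hd : Disjoint (Vars g) (Vars h)) : SplitsIntoSummands (g + h) := by
  intro u v huv heq
  obtain ⟨p, q, r, s, hgpq, hhrs, rfl, rfl, hp, hq, hr, hs⟩ := exists_refinement hd huv heq
  obtain ⟨hpg, hpu⟩ := Set.subset_inter_iff.1 hp
  obtain ⟨hqg, hqv⟩ := Set.subset_inter_iff.1 hq
  obtain ⟨hrh, hru⟩ := Set.subset_inter_iff.1 hr
  obtain ⟨hsh, hsv⟩ := Set.subset_inter_iff.1 hs
  obtain ⟨c, hc, hpc, hqc⟩ := hg (huv.mono hpu hqv) hgpq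
  obtain ⟨d, hd', hrd, hsd⟩ := hh (huv.mono hru hsv) hhrs
  refine ⟨c + d, by rw [Vars_add_eq_left hd', hc], ?_, ?_⟩
  · rw [add_add_add_comm]
    refine hpc.add hrd ?_
    rw [Vars_add_eq_left hc, Vars_add_eq_left hd']
    exact hd.mono hpg hrh
  · rw [add_sub_add_comm]
    refine hqc.add hsd ?_
    rw [Vars_sub_eq_left hc, Vars_sub_eq_left hd']
    exact hd.mono hqg hsh

lemma EndsWith.splitsIntoSummands {o : Op} (hf : EndsWith f o) (ho : o ≠ Op.sub) :
    SplitsIntoSummands f := by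
  have hsummand : IsSummand f := ⟨o, mem_add_mul_div_iff.2 ho, hf⟩
  induction hf with
  | var i => exact splitsIntoSummands_Xv i
  | add_base hij =>
    exact (splitsIntoSummands_Xv _).add (splitsIntoSummands_Xv _) (disjoint_Vars_Xv hij)
  | mul_base hij =>
    exact splitsIntoSummands_mul hsummand (.var _) (IsAE.var _).Vars_nonempty
      (disjoint_Vars_Xv hij)
  | div_base hij => exact splitsIntoSummands_div hsummand (.var _) (.var _) (disjoint_Vars_Xv hij)
  | add_rec _ _ hd _ ho₁ ho₂ hg hh ihg ihh =>
    exact (ihg ho₁ ⟨_, mem_add_mul_div_iff.2 ho₁, hg⟩).add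
      (ihh ho₂ ⟨_, mem_add_mul_div_iff.2 ho₂, hh⟩) hd
  | mul_rec hg hh hd => exact splitsIntoSummands_mul hsummand hg hh.Vars_nonempty hd
  | div_rec hg hh hd => exact splitsIntoSummands_div hsummand hg hh hd
  | sub_base | sub_rec => exact absurd rfl ho

lemma IsSummand.splitsIntoSummands (hf : IsSummand f) : SplitsIntoSummands f :=
  let ⟨_, ho, hf⟩ := hf
  hf.splitsIntoSummands (mem_add_mul_div_iff.1 ho)

lemma IsSummand.of_add (huv : IsSummand (u + v)) (hd : Disjoint (Vars u) (Vars v)) (hu : IsAE u)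
    (hv : (Vars v).Nonempty) : IsSummand v := by
  obtain ⟨c, hc, huc, hvc⟩ := huv.splitsIntoSummands hd rfl
  have hu_eq : u + c = u :=
    huc.isOdd.eq_of_Vars_sub_eq_empty hu.isOdd (by rwa [add_sub_cancel_left])
  obtain rfl : c = 0 := by rwa [add_eq_left] at hu_eq
  rw [sub_zero] at hvc
  exact hvc.isSummand hv

end Splitting

section Uniqueness

variable {f g h g' h' p q s : K}

-- Otherwise `q` and `-q` would be expressions up to constants, which oddness makes opposite, and
-- `-(s - q) = q - s` would be an expression too.
lemma IsSummand.Vars_eq_empty_of_firstType_sub (hadd : IsSummand (p + q)) (hsub : IsSummand (s - q))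
    (hfirst : FirstType (s - q)) (hpq : Disjoint (Vars p) (Vars q))
    (hsq : Disjoint (Vars s) (Vars q)) : Vars q = ∅ := by
  by_contra! hq
  obtain ⟨c, hc, -, hqc⟩ := hadd.splitsIntoSummands hpq rfl
  obtain ⟨d, hd, hsd, hqd⟩ :=
    hsub.splitsIntoSummands (u := s) (v := -q) (by rwa [Vars_neg]) (sub_eq_add_neg s q)
  have hneg : -(q - c) = -q - d := by
    refine hqc.isOdd.neg.eq_of_Vars_sub_eq_empty hqd.isOdd ?_
    rw [show -(q - c) - (-q - d) = c + d by ring, Vars_add_eq_left hd, hc]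
  have hVars : Vars (q - c) = Vars q := Vars_sub_eq_left hc
  have hqAE : IsAE (q - c) := (hqc.isSummand (by rwa [hVars])).isAE
  have heq : -(s - q) = q - c - (s + d) := by linear_combination hneg
  refine hfirst.2 ?_
  rw [heq]
  obtain hs0 | hs := hsd
  · rwa [hs0, sub_zero]
  · exact hqAE.sub hs.isAE (by rw [hVars, Vars_add_eq_left hd]; exact hsq.symm)

lemma disjoint_of_sub_eq_sub (hg : IsSummand g) (hh' : IsSummand h') (hfirst : FirstType h')
    (hgh : Disjoint (Vars g) (Vars h)) (hgh' : Disjoint (Vars g') (Vars h'))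
    (heq : g - h = g' - h') : Disjoint (Vars g) (Vars h') := by
  obtain ⟨p, q, r, s, rfl, -, rfl, hqs, hp, hq, -, hs⟩ :=
    exists_refinement (g := g) (h := -h) (u := g') (v := -h') (by rwa [Vars_neg])
      (by rwa [Vars_neg]) (by rwa [← sub_eq_add_neg, ← sub_eq_add_neg])
  rw [Vars_neg] at hq hs
  rw [Vars_neg] at hs
  obtain ⟨-, hpg'⟩ := Set.subset_inter_iff.1 hp
  obtain ⟨hqg, hqh'⟩ := Set.subset_inter_iff.1 hq
  obtain rfl : h' = -s - q := by linear_combination -hqs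
  have hq0 : Vars q = ∅ := by
    refine hg.Vars_eq_empty_of_firstType_sub hh' hfirst (hgh'.mono hpg' hqh') ?_
    rw [Vars_neg]
    exact (hgh.mono hqg (hs.trans Set.inter_subset_left)).symm
  rw [Vars_add_eq_left hq0]
  exact hgh'.mono_left hpg'

lemma sub_eq_sub_iff_of_firstType (hg : IsSummand g) (hh : IsSummand h) (hfirst : FirstType h)
    (hgh : Disjoint (Vars g) (Vars h)) (hg' : IsSummand g') (hh' : IsSummand h')
    (hfirst' : FirstType h') (hgh' : Disjoint (Vars g') (Vars h')) :
    g - h = g' - h' ↔ g = g' ∧ h = h' := by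
  refine ⟨fun heq => ?_, fun ⟨hgg', hhh'⟩ => by rw [hgg', hhh']⟩
  have hgh'_cross := disjoint_of_sub_eq_sub hg hh' hfirst' hgh hgh' heq
  have hg'h_cross := disjoint_of_sub_eq_sub hg' hh hfirst hgh' hgh heq.symm
  have hconst : Vars (g - g') = ∅ := by
    have hdiff : g - g' = h - h' := by linear_combination heq
    have hd : Disjoint (Vars g ∪ Vars g') (Vars h ∪ Vars h') := by
      simp [hgh, hgh', hgh'_cross, hg'h_cross]
    exact Set.subset_empty_iff.1
      (hd (Vars_sub_subset g g') (hdiff ▸ Vars_sub_subset h h'))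
  have hgg' : g = g' := hg.isAE.isOdd.eq_of_Vars_sub_eq_empty hg'.isAE.isOdd hconst
  exact ⟨hgg', by linear_combination hgg' - heq⟩

lemma EndsWith.exists_subDecomp (hf : EndsWith f Op.sub) : ∃ g h, SubDecomp f g h := by
  cases hf with
  | sub_base hij =>
    exact ⟨_, _, .var _, .var _, isSummand_Xv _, isSummand_Xv _, firstType_Xv _,
      disjoint_Vars_Xv hij, (Vars_sub (disjoint_Vars_Xv hij)).symm, rfl⟩
  | sub_rec hgAE hhAE hd _ ho₁ ho₂ hfirst hg hh =>
    exact ⟨_, _, hgAE, hhAE, ⟨_, mem_add_mul_div_iff.2 ho₁, hg⟩,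
      ⟨_, mem_add_mul_div_iff.2 ho₂, hh⟩, hfirst, hd, (Vars_sub hd).symm, rfl⟩

lemma SubDecomp.unique (H : SubDecomp f g h) (H' : SubDecomp f g' h') : g = g' ∧ h = h' :=
  let ⟨_, _, hg, hh, hfirst, hd, _, heq⟩ := H
  let ⟨_, _, hg', hh', hfirst', hd', _, heq'⟩ := H'
  (sub_eq_sub_iff_of_firstType hg hh hfirst hd hg' hh' hfirst' hd').1 (heq ▸ heq')

end Uniqueness

section ThirdType

variable {f g h G : K} {σ : Equiv.Perm ℕ}

lemma exists_eq_add_and_eq_sub {g₁ h₁ : K} (hgh : Disjoint (Vars g) (Vars h))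
    (hgh₁ : Disjoint (Vars g₁) (Vars h₁)) (hhh₁ : Disjoint (Vars h) (Vars h₁))
    (heq : h - g = g₁ - h₁) :
    ∃ G, g₁ = h + G ∧ g = h₁ - G ∧ Vars G ⊆ Vars g ∩ Vars g₁ := by
  obtain ⟨p, q, r, s, hpq, hrs, hpr, hqs, -, hq, hr, -⟩ :=
    exists_refinement (g := h) (h := -g) (u := g₁) (v := -h₁) (by rw [Vars_neg]; exact hgh.symm)
      (by rwa [Vars_neg]) (by rwa [← sub_eq_add_neg, ← sub_eq_add_neg])
  rw [Vars_neg] at hq hr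
  have hq0 : Vars q = ∅ := Set.subset_empty_iff.1 (hhh₁.inter_eq ▸ hq)
  refine ⟨r - q, by linear_combination hpr - hpq, by linear_combination -hrs + hqs, ?_⟩
  rwa [Vars_sub_eq_left hq0]

-- Comparing `h - g` with its image `σ·g - σ·h` gives `σ·g = h + G` and `g = σ·h - G`. Applying `σ`
-- to the latter, `h + G = σ²·h - σ·G`, and the uniqueness of differences yields `σ·G = -G`.
lemma SubDecomp.exists_thirdType (H : SubDecomp f g h) (hf : ThirdType f) :
    Iso g h ∨ ∃ G, IsAE G ∧ IsSummand G ∧ ThirdType G ∧ Disjoint (Vars G) (Vars h) ∧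
      Iso g (G + h) := by
  obtain ⟨hgAE, hhAE, (hg : IsSummand g), (hh : IsSummand h), hfirst, hgh, -, rfl⟩ := H
  obtain ⟨-, -, σ, hσ⟩ := hf
  rw [map_sub, neg_sub] at hσ
  have hgh₁ := disjoint_Vars_permAct σ hgh
  have hhh₁ := disjoint_of_sub_eq_sub hh (hh.map_permAct σ) (hfirst.map_permAct σ) hgh.symm hgh₁
    hσ.symm
  obtain ⟨G, hσg, hgG, hG⟩ := exists_eq_add_and_eq_sub hgh hgh₁ hhh₁ hσ.symm
  obtain ⟨hGg, hGg₁⟩ := Set.subset_inter_iff.1 hG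
  have hhG : Disjoint (Vars h) (Vars G) := hgh.symm.mono_right hGg
  have hh₁G : Disjoint (Vars (permAct σ h)) (Vars G) := hgh₁.symm.mono_right hGg₁
  obtain hG0 | hGne := (Vars G).eq_empty_or_nonempty
  · refine .inl ⟨σ, (hgAE.map_permAct σ).isOdd.eq_of_Vars_sub_eq_empty hhAE.isOdd ?_⟩
    rwa [hσg, add_sub_cancel_left]
  have hGsum : IsSummand G :=
    IsSummand.of_add (by rw [← hσg]; exact hg.map_permAct σ) hhG hhAE hGne
  have hnegsum : IsSummand (-G) :=
    IsSummand.of_add (by rwa [← sub_eq_add_neg, ← hgG]) (by rwa [Vars_neg])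
      (hhAE.map_permAct σ) (by rwa [Vars_neg])
  have hσG : permAct σ G - permAct σ (permAct σ h) = -G - h := by
    have hσgG := congrArg (permAct σ) hgG
    rw [map_sub] at hσgG
    linear_combination hσgG - hσg
  obtain ⟨hneg, -⟩ := (sub_eq_sub_iff_of_firstType (hGsum.map_permAct σ)
    ((hh.map_permAct σ).map_permAct σ) ((hfirst.map_permAct σ).map_permAct σ)
    (disjoint_Vars_permAct σ hh₁G.symm) hnegsum hh hfirst (by rw [Vars_neg]; exact hhG.symm)).1 hσG
  exact .inr ⟨G, hGsum.isAE, hGsum, ⟨hGsum.isAE, hnegsum.isAE, σ, hneg⟩, hhG.symm, σ,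
    hσg.trans (add_comm h G)⟩

lemma exists_perm_exchange {α : Type*} (σ : Equiv.Perm α) {A : Set α} (hA : Disjoint A (σ '' A)) :
    ∃ ρ : Equiv.Perm α, (∀ i ∈ A, ρ i = σ i) ∧ (∀ i ∈ A, ρ (σ i) = i) ∧
      ∀ i, i ∉ A → i ∉ σ '' A → ρ i = i := by
  classical
  let F : α → α := fun i => if i ∈ A then σ i else if i ∈ σ '' A then σ⁻¹ i else i
  have hFA : ∀ i ∈ A, F i = σ i := fun i hi => if_pos hi
  have hFσ : ∀ i ∈ A, F (σ i) = i := fun i hi => by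
    have hσi : σ i ∈ σ '' A := Set.mem_image_of_mem σ hi
    simp [F, hi, Set.disjoint_right.1 hA hσi]
  have hFfix : ∀ i, i ∉ A → i ∉ σ '' A → F i = i := fun i hi hσi =>
    (if_neg hi).trans (if_neg hσi)
  have hinv : Function.Involutive F := fun i => by
    by_cases hi : i ∈ A
    · rw [hFA i hi, hFσ i hi]
    by_cases hσi : i ∈ σ '' A
    · obtain ⟨j, hj, rfl⟩ := hσi
      rw [hFσ j hj, hFA j hj]
    · rw [hFfix i hi hσi, hFfix i hi hσi]
  exact ⟨hinv.toPerm, hFA, hFσ, hFfix⟩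

lemma exists_permAct_exchange (hd : Disjoint (Vars h) (Vars (permAct σ h))) :
    ∃ ρ, permAct ρ h = permAct σ h ∧ permAct ρ (permAct σ h) = h ∧
      ∀ k, Disjoint (Vars k) (Vars h) → Disjoint (Vars k) (Vars (permAct σ h)) →
        permAct ρ k = k := by
  rw [Vars_permAct] at hd
  obtain ⟨ρ, hρ, hρσ, hfix⟩ := exists_perm_exchange σ hd
  refine ⟨ρ, permAct_congr hρ, ?_, fun k hkh hkσ => permAct_eq_self fun i hi => ?_⟩
  · rw [← permAct_mul]
    exact permAct_eq_self hρσ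
  · rw [Vars_permAct] at hkσ
    exact hfix i (Set.disjoint_left.1 hkh hi) (Set.disjoint_left.1 hkσ hi)

lemma Iso.exists_permAct_eq_neg (hG : Iso G (-G)) :
    ∃ ρ, permAct ρ G = -G ∧ ∀ k, Disjoint (Vars k) (Vars G) → permAct ρ k = k := by
  classical
  obtain ⟨τ, hτ⟩ := hG
  have hVars : τ '' Vars G = Vars G := by rw [← Vars_permAct, hτ, Vars_neg]
  have hmem : ∀ i, τ i ∈ Vars G ↔ i ∈ Vars G := fun i => by
    conv_lhs => rw [← hVars, τ.injective.mem_set_image]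
  refine ⟨Equiv.Perm.ofSubtype (τ.subtypePerm hmem), ?_, fun k hk => permAct_eq_self fun i hi =>
    Equiv.Perm.ofSubtype_apply_of_not_mem _ (Set.disjoint_left.1 hk hi)⟩
  rw [← hτ]
  exact permAct_congr fun i hi => Equiv.Perm.ofSubtype_apply_of_mem _ hi

lemma Iso.iso_neg_add_sub_permAct (hG : Iso G (-G)) (hGh : Disjoint (Vars G) (Vars h))
    (hGσ : Disjoint (Vars G) (Vars (permAct σ h))) (hhσ : Disjoint (Vars h) (Vars (permAct σ h))) :
    Iso (G + h - permAct σ h) (-(G + h - permAct σ h)) := by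
  obtain ⟨ρ, hρh, hρσ, hρfix⟩ := exists_permAct_exchange hhσ
  obtain ⟨τ, hτG, hτfix⟩ := hG.exists_permAct_eq_neg
  refine ⟨ρ * τ, ?_⟩
  rw [permAct_mul, map_sub, map_add, hτG, hτfix h hGh.symm, hτfix _ hGσ.symm, map_sub, map_add,
    map_neg, hρfix G hGh hGσ, hρh, hρσ]
  ring

lemma iso_neg_of_permAct (hf : Iso (permAct σ f) (-permAct σ f)) : Iso f (-f) := by
  obtain ⟨ρ, hρ⟩ := hf
  exact ⟨σ⁻¹ * (ρ * σ), by rw [permAct_mul, permAct_mul, hρ, map_neg, permAct_inv_permAct]⟩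

lemma SubDecomp.thirdType_of_iso_add (H : SubDecomp f g h) (hG : Iso G (-G))
    (hGh : Disjoint (Vars G) (Vars h)) (hg : Iso g (G + h)) : ThirdType f := by
  obtain ⟨hgAE, hhAE, -, -, -, hgh, -, rfl⟩ := H
  refine ⟨hgAE.sub hhAE hgh, neg_sub g h ▸ hhAE.sub hgAE hgh.symm, ?_⟩
  obtain ⟨σ, hσ⟩ := hg
  have hd := disjoint_Vars_permAct σ hgh
  rw [hσ, Vars_add hGh, Set.disjoint_union_left] at hd
  apply iso_neg_of_permAct (σ := σ)
  rw [map_sub, hσ]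
  exact hG.iso_neg_add_sub_permAct hGh hd.1 hd.2

lemma SubDecomp.thirdType_iff (H : SubDecomp f g h) :
    ThirdType f ↔ Iso g h ∨ ∃ G, IsAE G ∧ IsSummand G ∧ ThirdType G ∧
      Disjoint (Vars G) (Vars h) ∧ Iso g (G + h) := by
  refine ⟨H.exists_thirdType, ?_⟩
  rintro (hgh | ⟨G, -, -, ⟨-, -, hG⟩, hGh, hg⟩)
  · exact H.thirdType_of_iso_add (G := 0) ⟨1, by simp⟩ (by simp [Vars_zero]) (by rwa [zero_add])
  · exact H.thirdType_of_iso_add hG hGh hg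

end ThirdType

/-- Every `f ∈ 𝒜(−)` can be expressed uniquely as `f = g − h` with
`g, h ∈ 𝒜(+,×,÷)`, disjoint variable sets whose union is `𝒱(f)`, and `h` of the first
type. Moreover, `f` is of the third type iff either `g ≅ h`, or `g ≅ G + h` for some
`G ∈ 𝒜(+,×,÷)` of the third type with `𝒱(G) ∩ 𝒱(h) = ∅`. -/
theorem sub_decomposition (f : K) (hf : IsAE f) (hsub : EndsWith f Op.sub) :
    (∃! gh : K × K, SubDecomp f gh.1 gh.2) ∧
    ∀ g h : K, SubDecomp f g h →
      (ThirdType f ↔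
        (Iso g h ∨
          ∃ G : K, IsAE G ∧ EndsIn G {Op.add, Op.mul, Op.div} ∧ ThirdType G ∧
            Disjoint (Vars G) (Vars h) ∧ Iso g (G + h))) := by
  refine ⟨?_, fun g h H => H.thirdType_iff⟩
  obtain ⟨g, h, H⟩ := hsub.exists_subDecomp
  refine ⟨(g, h), H, fun gh' H' => ?_⟩
  obtain ⟨hg, hh⟩ := H'.unique H
  exact Prod.ext hg hh

end
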